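/- arXiv:2604.06574 — 9 statements merged into one kernel-verified Lean document; each statement's English description precedes it below -/
import Mathlib

section
/- Let n, m be positive integers, let Ω ∈ ℂ^{2n×2n} be Hermitian, let 𝒞 ∈ ℂ^{2m×2n} be arbitrary, let S ∈ ℂ^{m×m} be unitary, and set 𝒟 := the block-diagonal matrix diag(S, conj(S)) ∈ ℂ^{2m×2m}. Define 𝒜 := −i·J_n·Ω − (1/2)·𝒞^♭·𝒞 and ℬ := −𝒞^♭·𝒟. Then the physical realizability identity holds: 𝒜 + 𝒜^♭ + ℬ·ℬ^♭ = 0. -/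
open Matrix

noncomputable section

/-- The matrix `J_k = diag(I_k, -I_k)` over `ℂ`. -/
def Jc (k : Type*) [Fintype k] [DecidableEq k] : Matrix (k ⊕ k) (k ⊕ k) ℂ :=
  Matrix.fromBlocks 1 0 0 (-1)

/-- The `♭`-adjoint `X^♭ = J_r · Xᴴ · J_k` of a `2k × 2r` complex matrix. -/
def flatAdj {k r : Type*} [Fintype k] [Fintype r] [DecidableEq k] [DecidableEq r]
    (X : Matrix (k ⊕ k) (r ⊕ r) ℂ) : Matrix (r ⊕ r) (k ⊕ k) ℂ :=
  Jc r * Xᴴ * Jc k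

/-!
The `♭`-adjoint is the adjoint for the indefinite form defined by `J`, hence a conjugate-linear
involution that reverses products. Since `J Ω` is `♭`-self-adjoint, `-i J Ω` is `♭`-skew-adjoint
and drops out of `𝒜 + 𝒜^♭`, leaving `-𝒞^♭ 𝒞`; and `ℬ ℬ^♭ = 𝒞^♭ (𝒟 𝒟^♭) 𝒞 = 𝒞^♭ 𝒞` because `𝒟` is
`♭`-unitary.
-/

section FlatAdjoint

variable {k r l : Type*} [Fintype k] [DecidableEq k] [Fintype r] [DecidableEq r]
  [Fintype l] [DecidableEq l]

theorem Jc_mul_Jc : Jc k * Jc k = 1 := by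
  simp [Jc, fromBlocks_multiply]

theorem isHermitian_Jc : (Jc k).IsHermitian := by
  simp [IsHermitian, Jc, fromBlocks_conjTranspose]

theorem flatAdj_sub (X Y : Matrix (k ⊕ k) (r ⊕ r) ℂ) :
    flatAdj (X - Y) = flatAdj X - flatAdj Y := by
  simp only [flatAdj, conjTranspose_sub, Matrix.mul_sub, Matrix.sub_mul]

theorem flatAdj_neg (X : Matrix (k ⊕ k) (r ⊕ r) ℂ) : flatAdj (-X) = -flatAdj X := by
  simp only [flatAdj, conjTranspose_neg, Matrix.mul_neg, Matrix.neg_mul]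

theorem flatAdj_smul (c : ℂ) (X : Matrix (k ⊕ k) (r ⊕ r) ℂ) :
    flatAdj (c • X) = star c • flatAdj X := by
  simp only [flatAdj, conjTranspose_smul, Matrix.mul_smul, Matrix.smul_mul]

theorem flatAdj_mul (X : Matrix (k ⊕ k) (r ⊕ r) ℂ) (Y : Matrix (r ⊕ r) (l ⊕ l) ℂ) :
    flatAdj (X * Y) = flatAdj Y * flatAdj X := by
  calc
    flatAdj (X * Y) = Jc l * Yᴴ * (1 : Matrix (r ⊕ r) (r ⊕ r) ℂ) * Xᴴ * Jc k := by
      simp only [flatAdj, conjTranspose_mul, Matrix.mul_one, Matrix.mul_assoc]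
    _ = Jc l * Yᴴ * (Jc r * Jc r) * Xᴴ * Jc k := by rw [Jc_mul_Jc]
    _ = flatAdj Y * flatAdj X := by simp only [flatAdj, Matrix.mul_assoc]

theorem flatAdj_flatAdj (X : Matrix (k ⊕ k) (r ⊕ r) ℂ) : flatAdj (flatAdj X) = X := by
  calc
    flatAdj (flatAdj X) = (Jc k * Jc k) * X * (Jc r * Jc r) := by
      simp only [flatAdj, conjTranspose_mul, isHermitian_Jc.eq, conjTranspose_conjTranspose,
        Matrix.mul_assoc]
    _ = X := by rw [Jc_mul_Jc, Jc_mul_Jc, Matrix.one_mul, Matrix.mul_one]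

theorem flatAdj_flatAdj_mul_self (X : Matrix (k ⊕ k) (r ⊕ r) ℂ) :
    flatAdj (flatAdj X * X) = flatAdj X * X := by
  rw [flatAdj_mul, flatAdj_flatAdj]

theorem flatAdj_Jc_mul (X : Matrix (k ⊕ k) (k ⊕ k) ℂ) : flatAdj (Jc k * X) = Jc k * Xᴴ := by
  rw [flatAdj, conjTranspose_mul, isHermitian_Jc.eq, Matrix.mul_assoc, Matrix.mul_assoc,
    Jc_mul_Jc, Matrix.mul_one]

theorem flatAdj_fromBlocks (A B C D : Matrix k r ℂ) :
    flatAdj (fromBlocks A B C D) = fromBlocks Aᴴ (-Cᴴ) (-Bᴴ) Dᴴ := by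
  simp [flatAdj, Jc, fromBlocks_conjTranspose, fromBlocks_multiply]

end FlatAdjoint

section Realizability

variable {k r : Type*} [Fintype k] [DecidableEq k] [Fintype r] [DecidableEq r]

theorem fromBlocks_mul_flatAdj_eq_one {U V : Matrix k k ℂ} (hU : U ∈ unitaryGroup k ℂ)
    (hV : V ∈ unitaryGroup k ℂ) :
    fromBlocks U 0 0 V * flatAdj (fromBlocks U 0 0 V) = 1 := by
  rw [mem_unitaryGroup_iff, star_eq_conjTranspose] at hU hV
  simp [flatAdj_fromBlocks, fromBlocks_multiply, hU, hV]

theorem smul_add_flatAdj_smul {X : Matrix (k ⊕ k) (k ⊕ k) ℂ} (hX : flatAdj X = X) (c : ℂ) :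
    c • X + flatAdj (c • X) = ((2 * c.re : ℝ) : ℂ) • X := by
  rw [flatAdj_smul, hX, ← add_smul, Complex.star_def, Complex.add_conj]

theorem mul_mul_flatAdj_of_mul_flatAdj_eq_one (X : Matrix (k ⊕ k) (r ⊕ r) ℂ)
    {U : Matrix (r ⊕ r) (r ⊕ r) ℂ} (hU : U * flatAdj U = 1) :
    X * U * flatAdj (X * U) = X * flatAdj X := by
  rw [flatAdj_mul, Matrix.mul_assoc, ← Matrix.mul_assoc U, hU, Matrix.one_mul]

theorem physical_realizability_general {Ω : Matrix (k ⊕ k) (k ⊕ k) ℂ} (hΩ : Ω.IsHermitian)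
    (𝒞 : Matrix (r ⊕ r) (k ⊕ k) ℂ) {𝒟 : Matrix (r ⊕ r) (r ⊕ r) ℂ} (h𝒟 : 𝒟 * flatAdj 𝒟 = 1)
    {𝒜 : Matrix (k ⊕ k) (k ⊕ k) ℂ}
    (h𝒜 : 𝒜 = (-Complex.I) • (Jc k * Ω) - (1 / 2 : ℂ) • (flatAdj 𝒞 * 𝒞))
    {ℬ : Matrix (k ⊕ k) (r ⊕ r) ℂ} (hℬ : ℬ = -(flatAdj 𝒞 * 𝒟)) :
    𝒜 + flatAdj 𝒜 + ℬ * flatAdj ℬ = 0 := by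
  have flatAdj_JΩ : flatAdj (Jc k * Ω) = Jc k * Ω := by rw [flatAdj_Jc_mul, hΩ.eq]
  have drift : 𝒜 + flatAdj 𝒜 = -(flatAdj 𝒞 * 𝒞) := by
    rw [h𝒜, flatAdj_sub, sub_add_sub_comm, smul_add_flatAdj_smul flatAdj_JΩ,
      smul_add_flatAdj_smul (flatAdj_flatAdj_mul_self 𝒞)]
    simp
  have input : ℬ * flatAdj ℬ = flatAdj 𝒞 * 𝒞 := by
    rw [hℬ, flatAdj_neg, Matrix.neg_mul, Matrix.mul_neg, neg_neg,
      mul_mul_flatAdj_of_mul_flatAdj_eq_one _ h𝒟, flatAdj_flatAdj]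
  rw [drift, input, neg_add_cancel]

end Realizability

/-- for `Ω` Hermitian, `𝒞` arbitrary, `S` unitary,
`𝒟 = diag(S, conj S)`, `𝒜 = -i J_n Ω - (1/2) 𝒞^♭ 𝒞`, `ℬ = -𝒞^♭ 𝒟`, the
physical realizability identity `𝒜 + 𝒜^♭ + ℬ ℬ^♭ = 0` holds. -/
theorem physical_realizability
    (n m : ℕ) (hn : 0 < n) (hm : 0 < m)
    (Ω : Matrix (Fin n ⊕ Fin n) (Fin n ⊕ Fin n) ℂ) (hΩ : Ω.IsHermitian)
    (𝒞 : Matrix (Fin m ⊕ Fin m) (Fin n ⊕ Fin n) ℂ)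
    (S : Matrix (Fin m) (Fin m) ℂ) (hS : S ∈ Matrix.unitaryGroup (Fin m) ℂ)
    (𝒟 : Matrix (Fin m ⊕ Fin m) (Fin m ⊕ Fin m) ℂ)
    (h𝒟 : 𝒟 = Matrix.fromBlocks S 0 0 (S.map (starRingEnd ℂ)))
    (𝒜 : Matrix (Fin n ⊕ Fin n) (Fin n ⊕ Fin n) ℂ)
    (h𝒜 : 𝒜 = (-Complex.I) • (Jc (Fin n) * Ω) - (1 / 2 : ℂ) • (flatAdj 𝒞 * 𝒞))
    (ℬ : Matrix (Fin n ⊕ Fin n) (Fin m ⊕ Fin m) ℂ)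
    (hℬ : ℬ = -(flatAdj 𝒞 * 𝒟)) :
    𝒜 + flatAdj 𝒜 + ℬ * flatAdj ℬ = 0 := by
  exact physical_realizability_general hΩ 𝒞
    (h𝒟 ▸ fromBlocks_mul_flatAdj_eq_one hS (map_star_mem_unitaryGroup_iff.mpr hS)) h𝒜 hℬ
end
end

section
/- Let n, m be positive integers, let Ω ∈ ℂ^{n×n} be Hermitian, let C ∈ ℂ^{m×n}, and let S ∈ ℂ^{m×m} be unitary. Define for ω ∈ ℝ the passive transfer matrix Ξ(iω) := S − C·(iωI_n + iΩ + (1/2)C†C)^{−1}·C†·S. Then for every real ω such that the matrix iωI_n + iΩ + (1/2)C†C is invertible, Ξ(iω)† · Ξ(iω) = I_m; that is, the passive transfer matrix is unitary at every point of the imaginary axis where it is defined. -/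
open Matrix

noncomputable section

/-!
The drift matrix `A = iω + iΩ + ½ CᴴC` has `A + Aᴴ = CᴴC`, since `i(ω + Ω)` is skew-Hermitian.
Sandwiching this relation between `A⁻ᴴ` and `A⁻¹` gives `A⁻ᴴ CᴴC A⁻¹ = A⁻¹ + A⁻ᴴ`, which says
exactly that the quadratic term of `(1 - C A⁻¹ Cᴴ)ᴴ (1 - C A⁻¹ Cᴴ)` cancels the linear ones.
Hence `Ξ(iω) = (1 - C A⁻¹ Cᴴ) S` is a product of unitaries.
-/

theorem star_mul_add_star_mul_of_mul_eq_one {R : Type*} [Semiring R] [StarRing R] {a b : R}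
    (hab : a * b = 1) : star b * (a + star a) * b = b + star b := by
  have hba : star b * star a = 1 := by rw [← star_mul, hab, star_one]
  rw [mul_add, add_mul, mul_assoc, hab, mul_one, hba, one_mul, add_comm]

theorem skew_add_half_smul_add_star {𝕜 E : Type*} [Field 𝕜] [StarRing 𝕜] [NeZero (2 : 𝕜)]
    [AddCommGroup E] [StarAddMonoid E] [Module 𝕜 E] [StarModule 𝕜 E] {k h : E}
    (hk : k ∈ skewAdjoint E) (hh : IsSelfAdjoint h) :
    (k + (1 / 2 : 𝕜) • h) + star (k + (1 / 2 : 𝕜) • h) = h := by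
  have star_half : star (1 / 2 : 𝕜) = 1 / 2 := by simp
  rw [star_add, star_smul, star_half, hh.star_eq, skewAdjoint.mem_iff.mp hk, add_add_add_comm,
    add_neg_cancel, zero_add, ← add_smul, add_halves, one_smul]

theorem real_mul_I_smul_one_add_I_smul_mem_skewAdjoint {A : Type*} [Ring A] [StarRing A]
    [Module ℂ A] [StarModule ℂ A] {a : A} (ha : IsSelfAdjoint a) (ω : ℝ) :
    ((ω : ℂ) * Complex.I) • (1 : A) + Complex.I • a ∈ skewAdjoint A := by
  have hI : Complex.I ∈ skewAdjoint ℂ := skewAdjoint.mem_iff.mpr Complex.conj_I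
  have hωI : (ω : ℂ) * Complex.I ∈ skewAdjoint ℂ := by simp [skewAdjoint.mem_iff]
  exact add_mem ((IsSelfAdjoint.one A).smul_mem_skewAdjoint hωI) (ha.smul_mem_skewAdjoint hI)

theorem imaginary_add_half_smul_add_star {A : Type*} [Ring A] [StarRing A] [Module ℂ A]
    [StarModule ℂ A] {a h : A} (ha : IsSelfAdjoint a) (hh : IsSelfAdjoint h) (ω : ℝ) :
    (((ω : ℂ) * Complex.I) • (1 : A) + Complex.I • a + (1 / 2 : ℂ) • h)
      + star (((ω : ℂ) * Complex.I) • (1 : A) + Complex.I • a + (1 / 2 : ℂ) • h) = h :=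
  skew_add_half_smul_add_star (real_mul_I_smul_one_add_I_smul_mem_skewAdjoint ha ω) hh

section Lossless

variable {ι κ R : Type*} [Fintype ι] [DecidableEq ι] [Fintype κ] [DecidableEq κ]

theorem conjTranspose_one_sub_mul_self_of_add_conjTranspose [Ring R] [StarRing R]
    {A B : Matrix ι ι R} {C : Matrix κ ι R} (hA : A + Aᴴ = Cᴴ * C) (hAB : A * B = 1) :
    (1 - C * B * Cᴴ)ᴴ * (1 - C * B * Cᴴ) = 1 := by
  have sandwich : Bᴴ * (Cᴴ * C) * B = B + Bᴴ := by
    rw [← hA]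
    exact star_mul_add_star_mul_of_mul_eq_one hAB
  have conj_eq : (C * B * Cᴴ)ᴴ = C * Bᴴ * Cᴴ := by
    simp only [conjTranspose_mul, conjTranspose_conjTranspose, Matrix.mul_assoc]
  have quadratic_eq : C * Bᴴ * Cᴴ * (C * B * Cᴴ) = C * B * Cᴴ + C * Bᴴ * Cᴴ :=
    calc C * Bᴴ * Cᴴ * (C * B * Cᴴ) = C * (Bᴴ * (Cᴴ * C) * B) * Cᴴ := by
          simp only [Matrix.mul_assoc]
      _ = C * B * Cᴴ + C * Bᴴ * Cᴴ := by rw [sandwich, Matrix.mul_add, Matrix.add_mul]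
  rw [conjTranspose_sub, conjTranspose_one, conj_eq, sub_mul, mul_sub, mul_sub, quadratic_eq]
  simp

theorem passive_transfer_unitary_on_imaginary_axis_general [CommRing R] [StarRing R]
    {A : Matrix ι ι R} {C : Matrix κ ι R} {S : Matrix κ κ R} (hA : A + Aᴴ = Cᴴ * C)
    (hdet : IsUnit A.det) (hS : S ∈ unitaryGroup κ R) :
    S - C * A⁻¹ * Cᴴ * S ∈ unitaryGroup κ R := by
  have hfactor : S - C * A⁻¹ * Cᴴ * S = (1 - C * A⁻¹ * Cᴴ) * S := by rw [sub_mul, one_mul]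
  rw [hfactor]
  exact mul_mem (mem_unitaryGroup_iff'.mpr
    (conjTranspose_one_sub_mul_self_of_add_conjTranspose hA (mul_nonsing_inv A hdet))) hS

end Lossless

/-- for `Ω` Hermitian, `C` arbitrary and `S` unitary, the passive
transfer matrix `Ξ(iω) = S - C (iω I + iΩ + (1/2) CᴴC)⁻¹ Cᴴ S` is unitary,
`Ξ(iω)ᴴ Ξ(iω) = I`, at every real `ω` where the inverse exists. -/
theorem passive_transfer_unitary_on_imaginary_axis
    (n m : ℕ) (hn : 0 < n) (hm : 0 < m)
    (Ω : Matrix (Fin n) (Fin n) ℂ) (hΩ : Ω.IsHermitian)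
    (C : Matrix (Fin m) (Fin n) ℂ)
    (S : Matrix (Fin m) (Fin m) ℂ) (hS : S ∈ Matrix.unitaryGroup (Fin m) ℂ) :
    ∀ ω : ℝ,
      IsUnit (((ω : ℂ) * Complex.I) • (1 : Matrix (Fin n) (Fin n) ℂ)
          + Complex.I • Ω + (1 / 2 : ℂ) • (Cᴴ * C)).det →
      (S - C * (((ω : ℂ) * Complex.I) • (1 : Matrix (Fin n) (Fin n) ℂ)
            + Complex.I • Ω + (1 / 2 : ℂ) • (Cᴴ * C))⁻¹ * Cᴴ * S)ᴴ *
        (S - C * (((ω : ℂ) * Complex.I) • (1 : Matrix (Fin n) (Fin n) ℂ)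
            + Complex.I • Ω + (1 / 2 : ℂ) • (Cᴴ * C))⁻¹ * Cᴴ * S) = 1 := by
  exact fun ω hdet => mem_unitaryGroup_iff'.mp <| passive_transfer_unitary_on_imaginary_axis_general
    (imaginary_add_half_smul_add_star hΩ (isHermitian_conjTranspose_mul_self C) ω) hdet hS
end
end

section
/- Let n, m be positive integers, let Ω ∈ ℂ^{n×n} be Hermitian, let C ∈ ℂ^{m×n}, and let S ∈ ℂ^{m×m} be unitary. Define A := −iΩ − (1/2)C†C and B := −C†S. Then the pair (A, B) is stabilizable if and only if the pair (C, A) is detectable. Here (A, B) is stabilizable means: for every λ ∈ ℂ with Re λ ≥ 0 and every x ∈ ℂⁿ, if x†A = λ·x† and x†B = 0 then x = 0; and (C, A) is detectable means: for every λ ∈ ℂ with Re λ ≥ 0 and every x ∈ ℂⁿ, if A·x = λ·x and C·x = 0 then x = 0. -/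
open Matrix

noncomputable section

/-!
A normal matrix has the same left and right eigenvectors: `M *ᵥ x = 0` and `Mᴴ *ᵥ x = 0` are
equivalent for normal `M`, because `Mᴴ * M = M * Mᴴ`, and `M` may be replaced by `M - μ • 1`.
The drift `A` is the normal matrix `-iΩ` minus a multiple of `Cᴴ * C`, which annihilates every
vector `x` with `C *ᵥ x = 0` from either side. As `S` is invertible, `star x ᵥ* B = 0` holds exactly
when `C *ᵥ x = 0`, so the two tests range over the same eigenvectors of `-iΩ`.
-/

section PBH

variable {R l m n : Type*} [CommRing R] [StarRing R] [Fintype l] [Fintype n]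

/-- Popov–Belevitch–Hautus test for the input pair `(A, B)`, restricted to eigenvalues in `Λ`:
no left eigenvector `star x` of `A` with eigenvalue in `Λ` is annihilated by `B`. Over `ℂ`, taking
`Λ` to be the closed right half-plane gives stabilizability, and taking it to be everything gives
controllability. -/
def IsPBHStabilizable (Λ : Set R) (A : Matrix n n R) (B : Matrix n m R) : Prop :=
  ∀ μ ∈ Λ, ∀ x : n → R, star x ᵥ* A = μ • star x → star x ᵥ* B = 0 → x = 0

/-- Popov–Belevitch–Hautus test for the output pair `(C, A)`, restricted to eigenvalues in `Λ`:
no right eigenvector of `A` with eigenvalue in `Λ` is annihilated by `C`. Over `ℂ`, taking `Λ` to be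
the closed right half-plane gives detectability, and taking it to be everything gives
observability. -/
def IsPBHDetectable (Λ : Set R) (C : Matrix l n R) (A : Matrix n n R) : Prop :=
  ∀ μ ∈ Λ, ∀ x : n → R, A *ᵥ x = μ • x → C *ᵥ x = 0 → x = 0

theorem star_vecMul_conjTranspose_mul_eq_zero_iff (C : Matrix l n R) {S : Matrix l m R}
    (hS : Function.Injective S.vecMul) (x : n → R) :
    star x ᵥ* (Cᴴ * S) = 0 ↔ C *ᵥ x = 0 := by
  rw [← vecMul_vecMul, ← star_mulVec, hS.eq_iff' (zero_vecMul S), star_eq_zero]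

variable [PartialOrder R] [StarOrderedRing R] [NoZeroDivisors R]

theorem conjTranspose_mulVec_eq_zero_iff_of_isStarNormal (M : Matrix n n R) [IsStarNormal M]
    (x : n → R) : Mᴴ *ᵥ x = 0 ↔ M *ᵥ x = 0 := by
  have normal : Mᴴ * M = M * Mᴴ := star_comm_self' M
  rw [← self_mul_conjTranspose_mulVec_eq_zero, ← normal, conjTranspose_mul_self_mulVec_eq_zero]

theorem star_vecMul_eq_smul_iff_of_isStarNormal (N : Matrix n n R) [IsStarNormal N] (μ : R)
    (x : n → R) : star x ᵥ* N = μ • star x ↔ N *ᵥ x = μ • x := by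
  classical
  have : IsStarNormal (N - μ • 1) := by
    refine Commute.isStarNormal_sub ?_
    rw [star_smul, star_one]
    exact (Commute.one_right N).smul_right (star μ)
  calc star x ᵥ* N = μ • star x
      ↔ star x ᵥ* (N - μ • 1) = 0 := by
        rw [vecMul_sub, vecMul_smul, vecMul_one, sub_eq_zero]
    _ ↔ (N - μ • 1)ᴴ *ᵥ x = 0 := by
        rw [← star_eq_zero, star_vecMul, star_star]
    _ ↔ (N - μ • 1) *ᵥ x = 0 := conjTranspose_mulVec_eq_zero_iff_of_isStarNormal _ x
    _ ↔ N *ᵥ x = μ • x := by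
        rw [sub_mulVec, smul_mulVec, one_mulVec, sub_eq_zero]

theorem star_vecMul_sub_eq_smul_iff_of_mulVec_eq_zero (N : Matrix n n R) [IsStarNormal N]
    {C : Matrix l n R} (K : Matrix l l R) (μ : R) {x : n → R} (hx : C *ᵥ x = 0) :
    star x ᵥ* (N - Cᴴ * K * C) = μ • star x ↔ (N - Cᴴ * K * C) *ᵥ x = μ • x := by
  have left : star x ᵥ* (N - Cᴴ * K * C) = star x ᵥ* N := by
    rw [vecMul_sub, Matrix.mul_assoc, ← vecMul_vecMul, ← star_mulVec, hx, star_zero,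
      zero_vecMul, sub_zero]
  have right : (N - Cᴴ * K * C) *ᵥ x = N *ᵥ x := by
    rw [sub_mulVec, ← mulVec_mulVec, hx, mulVec_zero, sub_zero]
  rw [left, right, star_vecMul_eq_smul_iff_of_isStarNormal]

theorem passive_stabilizable_iff_detectable_general (Λ : Set R) (N : Matrix n n R)
    [IsStarNormal N] (C : Matrix l n R) (K : Matrix l l R) {S : Matrix l m R}
    (hS : Function.Injective S.vecMul) {A : Matrix n n R} (hA : A = N - Cᴴ * K * C)
    {B : Matrix n m R} (hB : B = -(Cᴴ * S)) :
    IsPBHStabilizable Λ A B ↔ IsPBHDetectable Λ C A := by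
  subst hA hB
  refine forall₃_congr fun μ _ x ↦ ?_
  rw [vecMul_neg, neg_eq_zero, star_vecMul_conjTranspose_mul_eq_zero_iff C hS]
  constructor <;> intro h hμ hx
  · exact h ((star_vecMul_sub_eq_smul_iff_of_mulVec_eq_zero N K μ hx).2 hμ) hx
  · exact h ((star_vecMul_sub_eq_smul_iff_of_mulVec_eq_zero N K μ hx).1 hμ) hx

end PBH

/-- for `Ω` Hermitian, `S` unitary, `A = -iΩ - (1/2)CᴴC` and
`B = -Cᴴ S`, the pair `(A, B)` is stabilizable (in the PBH sense) if and only
if the pair `(C, A)` is detectable (in the PBH sense). -/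
theorem passive_stabilizable_iff_detectable
    (n m : ℕ) (hn : 0 < n) (hm : 0 < m)
    (Ω : Matrix (Fin n) (Fin n) ℂ) (hΩ : Ω.IsHermitian)
    (C : Matrix (Fin m) (Fin n) ℂ)
    (S : Matrix (Fin m) (Fin m) ℂ) (hS : S ∈ Matrix.unitaryGroup (Fin m) ℂ)
    (A : Matrix (Fin n) (Fin n) ℂ)
    (hA : A = (-Complex.I) • Ω - (1 / 2 : ℂ) • (Cᴴ * C))
    (B : Matrix (Fin n) (Fin m) ℂ) (hB : B = -(Cᴴ * S)) :
    (∀ lam : ℂ, 0 ≤ lam.re → ∀ x : Fin n → ℂ,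
        Matrix.vecMul (star x) A = lam • star x → Matrix.vecMul (star x) B = 0 → x = 0) ↔
    (∀ lam : ℂ, 0 ≤ lam.re → ∀ x : Fin n → ℂ,
        A.mulVec x = lam • x → C.mulVec x = 0 → x = 0) := by
  have : IsStarNormal Ω := hΩ.isSelfAdjoint.isStarNormal
  have S_injective := vecMul_injective_of_isUnit (Unitary.isUnit_coe (U := ⟨S, hS⟩))
  open scoped ComplexOrder in
  exact passive_stabilizable_iff_detectable_general {μ | 0 ≤ μ.re} (-Complex.I • Ω) C
    ((1 / 2 : ℂ) • 1) S_injective (by simpa using hA) hB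
end
end

section
/- Let m, n be positive integers and let ℂ₀ ∈ ℝ^{2m×2n}. Consider the drift matrix A := −(1/2)·ℂ₀ᵀ·ℂ₀ of a passive linear quantum system written in the rotating frame in which the Hamiltonian contribution vanishes. Then: (a) A is Hurwitz (every eigenvalue of A, viewed as a complex matrix, has strictly negative real part) if and only if A is nonsingular; and (b) if m < n (fewer input field channels than system oscillators) then A is necessarily singular, so the system cannot be Hurwitz stable. -/
open Matrix

noncomputable section

/-! The spectrum of a negative semidefinite matrix lies in `(-∞, 0]`, so invertibility, which
excludes the eigenvalue `0`, is all that separates it from being Hurwitz. When `C` has fewer rows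
than columns, `Cᴴ * C` factors through a space of smaller dimension and is therefore singular. -/

section Determinant

variable {ι : Type*} [Fintype ι] [DecidableEq ι]

theorem mem_spectrum_iff_det_sub_smul_one_eq_zero {K : Type*} [Field K] {A : Matrix ι ι K}
    {μ : K} : μ ∈ spectrum K A ↔ (A - μ • (1 : Matrix ι ι K)).det = 0 := by
  rw [spectrum.mem_iff, IsUnit.sub_iff, Algebra.algebraMap_eq_smul_one, isUnit_iff_isUnit_det,
    isUnit_iff_ne_zero, not_not]

theorem det_map_eq_zero_iff {R S : Type*} [CommRing R] [CommRing S] {f : R →+* S}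
    (hf : Function.Injective f) {A : Matrix ι ι R} : (A.map f).det = 0 ↔ A.det = 0 := by
  rw [← RingHom.mapMatrix_apply, ← RingHom.map_det, map_eq_zero_iff f hf]

-- Padding `B` with zero columns and `C` with zero rows makes both factors square without changing
-- their product.
theorem det_mul_eq_zero_of_card_lt {κ R : Type*} [Fintype κ] [CommRing R]
    (B : Matrix ι κ R) (C : Matrix κ ι R) (hcard : Fintype.card κ < Fintype.card ι) :
    (B * C).det = 0 := by
  obtain ⟨d, hd⟩ := Nat.exists_eq_add_of_lt hcard
  have e : ι ≃ κ ⊕ Fin (d + 1) := Fintype.equivOfCardEq (by simp [hd, add_assoc])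
  let B' : Matrix ι ι R := (fromCols B 0).submatrix id e
  let C' : Matrix ι ι R := (fromRows C 0).submatrix e id
  have hmul : B * C = B' * C' := by
    simp [B', C', fromCols_mul_fromRows]
  have hC' : C'.det = 0 := det_eq_zero_of_row_eq_zero (e.symm (Sum.inr 0)) (by simp [C'])
  rw [hmul, det_mul, hC', mul_zero]

end Determinant

section Hurwitz

variable {ι : Type*} [Fintype ι] [DecidableEq ι]

/-- Hurwitz stability of a complex matrix. A real matrix is Hurwitz when its image under
`algebraMap ℝ ℂ` is. -/
def IsHurwitz (A : Matrix ι ι ℂ) : Prop :=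
  ∀ μ ∈ spectrum ℂ A, μ.re < 0

theorem isHurwitz_iff_forall_det {A : Matrix ι ι ℂ} :
    IsHurwitz A ↔ ∀ μ : ℂ, (A - μ • (1 : Matrix ι ι ℂ)).det = 0 → μ.re < 0 := by
  simp only [IsHurwitz, mem_spectrum_iff_det_sub_smul_one_eq_zero]

theorem IsHurwitz.isUnit {A : Matrix ι ι ℂ} (hA : IsHurwitz A) : IsUnit A :=
  spectrum.isUnit_of_zero_notMem ℂ fun h => lt_irrefl 0 (hA 0 h)

open scoped ComplexOrder in
theorem isHurwitz_iff_det_ne_zero_of_posSemidef_neg {A : Matrix ι ι ℂ} (hA : (-A).PosSemidef) :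
    IsHurwitz A ↔ A.det ≠ 0 := by
  rw [← isUnit_iff_ne_zero, ← isUnit_iff_isUnit_det]
  refine ⟨IsHurwitz.isUnit, fun hunit μ hμ => ?_⟩
  have hμ_nonneg : 0 ≤ -μ :=
    (posSemidef_iff_isHermitian_and_spectrum_nonneg.mp hA).2 (by simpa [← spectrum.neg_eq] using hμ)
  have hμ_ne : μ ≠ 0 := spectrum.ne_zero_of_mem_of_unit (a := hunit.unit) hμ
  have hμ_neg : μ < 0 := lt_of_le_of_ne (neg_nonneg.mp hμ_nonneg) hμ_ne
  exact (Complex.neg_iff.mp hμ_neg).1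

end Hurwitz

section PassiveDrift

variable {ι κ 𝕜 : Type*} [Fintype κ] [RCLike 𝕜]

/-- The drift matrix of a passive linear system with coupling matrix `C`, in the rotating frame in
which the Hamiltonian contribution vanishes. Stated with `Cᴴ`, so that it covers the real quadrature
representation, where `Cᴴ = Cᵀ`, as well as the complex one. -/
def passiveDrift (C : Matrix κ ι 𝕜) : Matrix ι ι 𝕜 :=
  -((1 / 2 : ℝ) • (Cᴴ * C))

theorem map_algebraMap_passiveDrift (C : Matrix κ ι ℝ) :
    (passiveDrift C).map (algebraMap ℝ 𝕜) = passiveDrift (C.map (algebraMap ℝ 𝕜)) := by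
  ext i j
  simp [passiveDrift, Matrix.mul_apply, RCLike.real_smul_eq_coe_mul]

open scoped ComplexOrder in
theorem posSemidef_neg_passiveDrift [Finite ι] (C : Matrix κ ι 𝕜) :
    (-passiveDrift C).PosSemidef := by
  rw [passiveDrift, neg_neg]
  exact (posSemidef_conjTranspose_mul_self C).smul (by positivity)

theorem det_passiveDrift_eq_zero_of_card_lt [Fintype ι] [DecidableEq ι] (C : Matrix κ ι 𝕜)
    (hcard : Fintype.card κ < Fintype.card ι) : (passiveDrift C).det = 0 := by
  rw [passiveDrift, ← Matrix.smul_mul, ← Matrix.neg_mul, det_mul_eq_zero_of_card_lt _ _ hcard]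

end PassiveDrift

theorem passive_hurwitz_iff_nonsingular_general {ι κ : Type*} [Fintype ι] [DecidableEq ι]
    [Fintype κ] (C : Matrix κ ι ℂ) :
    (IsHurwitz (passiveDrift C) ↔ (passiveDrift C).det ≠ 0) ∧
      (Fintype.card κ < Fintype.card ι → (passiveDrift C).det = 0) :=
  ⟨isHurwitz_iff_det_ne_zero_of_posSemidef_neg (posSemidef_neg_passiveDrift C),
    det_passiveDrift_eq_zero_of_card_lt C⟩

/-- for `ℂ₀ ∈ ℝ^{2m×2n}` and the drift matrix
`A = -(1/2) ℂ₀ᵀ ℂ₀` of a passive linear quantum system in the rotating frame: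
(a) `A` is Hurwitz (all complex eigenvalues have negative real part) iff `A`
is nonsingular; (b) if `m < n` then `A` is singular. -/
theorem passive_hurwitz_iff_nonsingular
    (m n : ℕ) (hm : 0 < m) (hn : 0 < n)
    (C₀ : Matrix (Fin m ⊕ Fin m) (Fin n ⊕ Fin n) ℝ)
    (A : Matrix (Fin n ⊕ Fin n) (Fin n ⊕ Fin n) ℝ)
    (hA : A = -((1 / 2 : ℝ) • (C₀ᵀ * C₀))) :
    ((∀ lam : ℂ,
        ((A.map (algebraMap ℝ ℂ)) - lam • (1 : Matrix (Fin n ⊕ Fin n) (Fin n ⊕ Fin n) ℂ)).det = 0 →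
        lam.re < 0) ↔ A.det ≠ 0)
    ∧ (m < n → A.det = 0) := by
  obtain rfl : A = passiveDrift C₀ := hA
  simpa only [isHurwitz_iff_forall_det, ← map_algebraMap_passiveDrift, ne_eq,
    det_map_eq_zero_iff (algebraMap ℝ ℂ).injective, Fintype.card_sum, Fintype.card_fin, ← two_mul,
    Nat.mul_lt_mul_left two_pos]
    using passive_hurwitz_iff_nonsingular_general (C₀.map (algebraMap ℝ ℂ))
end
end

section
/- Let n, k, l be positive integers and γ > 0. Let A_x, A_y ∈ ℝ^{2n×2n}, C₁ ∈ ℝ^{2k×2n}, C₂ ∈ ℝ^{2l×2n}, B₁ ∈ ℝ^{2n×2l}, B₂ ∈ ℝ^{2n×2k} satisfy A_y = −𝕁_nᵀ·A_xᵀ·𝕁_n, B₁·B₁ᵀ = 𝕁_nᵀ·C₂ᵀ·C₂·𝕁_n, and B₂·B₂ᵀ = 𝕁_nᵀ·C₁ᵀ·C₁·𝕁_n. If Y ∈ ℝ^{2n×2n} solves the algebraic Riccati equation A_y·Y + Y·A_yᵀ + Y·(C₁ᵀC₁ − γ²·C₂ᵀC₂)·Y = 0, then Ŷ := γ²·𝕁_nᵀ·Y·𝕁_n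 solves the algebraic Riccati equation −A_xᵀ·Ŷ − Ŷ·A_x + Ŷ·((1/γ²)·B₂B₂ᵀ − B₁B₁ᵀ)·Ŷ = 0. -/
open Matrix

noncomputable section

/-- The symplectic matrix `𝕁_k = [[0, I],[-I, 0]]` over `ℝ`. -/
def JJr (k : Type*) [Fintype k] [DecidableEq k] : Matrix (k ⊕ k) (k ⊕ k) ℝ :=
  Matrix.fromBlocks 0 1 (-1) 0

/-! Conjugation `φ x = 𝕁ᵀ x 𝕁` is an automorphism because `𝕁` is orthogonal, and an involution
because `𝕁² = -1`. It therefore carries `A_y`, `A_yᵀ` back to `-A_xᵀ`, `-A_x`, and it maps the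
equation for `Y` to an equation for `φ Y`; rescaling the unknown by `γ²` divides the quadratic
coefficient by `γ²`. -/

section RiccatiResidual

variable {K R : Type*}

/-- The left-hand side of the algebraic Riccati equation `a x + x b + x q x = 0`. The coefficients
`a` and `b` are independent, so that no involution is needed; the usual equation has `b = aᵀ`. -/
def riccatiResidual [NonUnitalNonAssocSemiring R] (a b q x : R) : R :=
  a * x + x * b + x * q * x

lemma riccatiResidual_smul [NonUnitalSemiring R] [DistribSMul K R] [IsScalarTower K R R]
    [SMulCommClass K R R] (c : K) (a b q x : R) :
    riccatiResidual a b q (c • x) = c • riccatiResidual a b (c • q) x := by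
  simp only [riccatiResidual, smul_add, mul_smul_comm, smul_mul_assoc]

lemma riccatiResidual_conj [Semiring R] {u v : R} (huv : u * v = 1) (a b q x : R) :
    riccatiResidual (v * a * u) (v * b * u) (v * q * u) (v * x * u) =
      v * riccatiResidual a b q x * u := by
  have cancel (y : R) : u * (v * y) = y := by rw [← mul_assoc, huv, one_mul]
  simp only [riccatiResidual, mul_add, add_mul, mul_assoc, cancel]

end RiccatiResidual

section StarConjugation

variable {K R : Type*} [Ring R] {j : R}

lemma mul_star_self_of_star_eq_neg [Star R] (hstar : star j = -j)
    (hj : star j * j = 1) : j * star j = 1 := by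
  rw [hstar, mul_neg, ← neg_mul, ← hstar, hj]

lemma star_conj_star_conj_of_star_eq_neg [Star R] (hstar : star j = -j)
    (hj : star j * j = 1) (x : R) : star j * (star j * x * j) * j = x := by
  have hsq : j * j = -1 := by rw [← hj, hstar, neg_mul, neg_neg]
  calc star j * (star j * x * j) * j = (j * j) * x * (j * j) := by
        simp only [hstar, neg_mul, mul_neg, neg_neg, mul_assoc]
    _ = x := by rw [hsq, neg_one_mul, mul_neg_one, neg_neg]

theorem riccati_transform_general [StarRing R] [Field K] [Algebra K R] {c : K}
    (hc : c ≠ 0) (hstar : star j = -j) (hj : star j * j = 1) {a a' p₁ p₂ q₁ q₂ y : R}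
    (ha' : a' = -(star j * star a * j))
    (hq₁ : q₁ = star j * p₂ * j) (hq₂ : q₂ = star j * p₁ * j)
    (hy : a' * y + y * star a' + y * (p₁ - c • p₂) * y = 0) :
    -(star a * (c • (star j * y * j))) - c • (star j * y * j) * a
      + c • (star j * y * j) * (c⁻¹ • q₂ - q₁) * (c • (star j * y * j)) = 0 := by
  have conj_conj := star_conj_star_conj_of_star_eq_neg hstar hj
  have conj_a' : star j * a' * j = -star a := by
    rw [ha', mul_neg, neg_mul, conj_conj]
  have conj_star_a' : star j * star a' * j = -a := by
    simpa only [star_neg, star_mul, star_star, mul_assoc] using congrArg star conj_a'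
  have conj_quadratic : star j * (p₁ - c • p₂) * j = c • (c⁻¹ • q₂ - q₁) := by
    rw [hq₁, hq₂, smul_sub, smul_inv_smul₀ hc, mul_sub, sub_mul, mul_smul_comm, smul_mul_assoc]
  calc -(star a * (c • (star j * y * j))) - c • (star j * y * j) * a
        + c • (star j * y * j) * (c⁻¹ • q₂ - q₁) * (c • (star j * y * j))
      = riccatiResidual (-star a) (-a) (c⁻¹ • q₂ - q₁) (c • (star j * y * j)) := by
        rw [riccatiResidual, neg_mul, mul_neg, ← sub_eq_add_neg]
    _ = c • (star j * riccatiResidual a' (star a') (p₁ - c • p₂) y * j) := by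
        rw [riccatiResidual_smul, ← conj_a', ← conj_star_a', ← conj_quadratic,
          riccatiResidual_conj (mul_star_self_of_star_eq_neg hstar hj)]
    _ = 0 := by rw [riccatiResidual, hy, mul_zero, zero_mul, smul_zero]

end StarConjugation

section JJr

variable (k : Type*) [Fintype k] [DecidableEq k]

lemma JJr_eq_neg_J : JJr k = -J k ℝ := by
  simp [JJr, J, fromBlocks_neg]

lemma star_JJr : star (JJr k) = -JJr k := by
  rw [star_eq_conjTranspose, conjTranspose_eq_transpose_of_trivial, JJr_eq_neg_J, transpose_neg,
    J_transpose]

lemma star_JJr_mul_JJr : star (JJr k) * JJr k = 1 := by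
  rw [star_JJr, JJr_eq_neg_J, neg_neg, mul_neg, J_squared, neg_neg]

end JJr

/-- if `A_y = -𝕁ᵀA_xᵀ𝕁`, `B₁B₁ᵀ = 𝕁ᵀC₂ᵀC₂𝕁`,
`B₂B₂ᵀ = 𝕁ᵀC₁ᵀC₁𝕁` and `Y` solves
`A_y Y + Y A_yᵀ + Y (C₁ᵀC₁ - γ²C₂ᵀC₂) Y = 0`, then `Ŷ = γ² 𝕁ᵀ Y 𝕁` solves
`-A_xᵀŶ - ŶA_x + Ŷ((1/γ²)B₂B₂ᵀ - B₁B₁ᵀ)Ŷ = 0`. -/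
theorem riccati_transform
    (n k l : ℕ) (hn : 0 < n) (hk : 0 < k) (hl : 0 < l) (γ : ℝ) (hγ : 0 < γ)
    (Ax Ay : Matrix (Fin n ⊕ Fin n) (Fin n ⊕ Fin n) ℝ)
    (C₁ : Matrix (Fin k ⊕ Fin k) (Fin n ⊕ Fin n) ℝ)
    (C₂ : Matrix (Fin l ⊕ Fin l) (Fin n ⊕ Fin n) ℝ)
    (B₁ : Matrix (Fin n ⊕ Fin n) (Fin l ⊕ Fin l) ℝ)
    (B₂ : Matrix (Fin n ⊕ Fin n) (Fin k ⊕ Fin k) ℝ)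
    (hAy : Ay = -((JJr (Fin n))ᵀ * Axᵀ * JJr (Fin n)))
    (hB₁ : B₁ * B₁ᵀ = (JJr (Fin n))ᵀ * (C₂ᵀ * C₂) * JJr (Fin n))
    (hB₂ : B₂ * B₂ᵀ = (JJr (Fin n))ᵀ * (C₁ᵀ * C₁) * JJr (Fin n))
    (Y : Matrix (Fin n ⊕ Fin n) (Fin n ⊕ Fin n) ℝ)
    (hY : Ay * Y + Y * Ayᵀ + Y * (C₁ᵀ * C₁ - (γ ^ 2 : ℝ) • (C₂ᵀ * C₂)) * Y = 0)
    (Yhat : Matrix (Fin n ⊕ Fin n) (Fin n ⊕ Fin n) ℝ)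
    (hYhat : Yhat = (γ ^ 2 : ℝ) • ((JJr (Fin n))ᵀ * Y * JJr (Fin n))) :
    -(Axᵀ * Yhat) - Yhat * Ax
      + Yhat * ((1 / γ ^ 2 : ℝ) • (B₂ * B₂ᵀ) - B₁ * B₁ᵀ) * Yhat = 0 := by
  rw [hYhat, one_div]
  -- On real matrices `star` unfolds to the transpose, so the hypotheses match definitionally.
  exact riccati_transform_general (pow_pos hγ 2).ne' (star_JJr _) (star_JJr_mul_JJr _)
    hAy hB₁ hB₂ hY
end
end

section
/- Let A ∈ ℝ^{p×p}, B ∈ ℝ^{p×q}, C ∈ ℝ^{p×r}, and let γ > 0. Suppose S, T ∈ ℝ^{p×p} are symmetric and solve the Lyapunov equations −A·S − S·Aᵀ + B·Bᵀ = 0 and −A·T − T·Aᵀ + C·Cᵀ = 0, and suppose P := S − (1/γ²)·T is invertible. Then X := P^{−1} is symmetric and solves the algebraic Riccati equation Aᵀ·X + X·A + X·((1/γ²)·C·Cᵀ − B·Bᵀ)·X = 0. -/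
open Matrix

noncomputable section

theorem sylvester_equation_sub_smul {K R : Type*} [NonUnitalNonAssocRing R]
    [DistribSMul K R] [SMulCommClass K R R] [IsScalarTower K R R]
    {a b s t q w : R} (c : K) (hs : a * s + s * b = q) (ht : a * t + t * b = w) :
    a * (s - c • t) + (s - c • t) * b = q - c • w := by
  rw [← hs, ← ht, mul_sub, sub_mul, mul_smul_comm, smul_mul_assoc, smul_add]
  abel

theorem sylvester_equation_inverse {R : Type*} [Semiring R] {a b p x q : R}
    (hpx : p * x = 1) (hxp : x * p = 1) (h : a * p + p * b = q) :
    b * x + x * a = x * q * x := by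
  calc b * x + x * a
      = x * p * b * x + x * a * (p * x) := by rw [hxp, hpx, one_mul, mul_one]
    _ = x * (a * p + p * b) * x := by simp only [mul_add, add_mul, mul_assoc, add_comm]
    _ = x * q * x := by rw [h]

theorem lyapunov_to_riccati_general {n R : Type*} [Fintype n] [DecidableEq n] [CommRing R]
    {A S T Q W : Matrix n n R} {c : R} (hSsym : S.IsSymm) (hTsym : T.IsSymm)
    (hS : -(A * S) - S * Aᵀ + Q = 0) (hT : -(A * T) - T * Aᵀ + W = 0)
    (hP : IsUnit (S - c • T).det) :
    ((S - c • T)⁻¹).IsSymm ∧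
      Aᵀ * (S - c • T)⁻¹ + (S - c • T)⁻¹ * A +
        (S - c • T)⁻¹ * (c • W - Q) * (S - c • T)⁻¹ = 0 := by
  have hQ : A * S + S * Aᵀ = Q := by rwa [← neg_add', neg_add_eq_zero] at hS
  have hW : A * T + T * Aᵀ = W := by rwa [← neg_add', neg_add_eq_zero] at hT
  have hRiccati := sylvester_equation_inverse (mul_nonsing_inv _ hP) (nonsing_inv_mul _ hP)
    (sylvester_equation_sub_smul c hQ hW)
  refine ⟨(hSsym.sub (hTsym.smul c)).inv, ?_⟩
  rw [hRiccati, ← neg_sub Q, mul_neg, neg_mul, add_neg_cancel]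

/-- if symmetric `S, T` solve the Lyapunov equations
`-AS - SAᵀ + BBᵀ = 0` and `-AT - TAᵀ + CCᵀ = 0`, and `P = S - (1/γ²)T` is
invertible, then `X = P⁻¹` is symmetric and solves the algebraic Riccati
equation `AᵀX + XA + X((1/γ²)CCᵀ - BBᵀ)X = 0`. -/
theorem lyapunov_to_riccati
    (p q r : ℕ)
    (A : Matrix (Fin p) (Fin p) ℝ)
    (B : Matrix (Fin p) (Fin q) ℝ)
    (C : Matrix (Fin p) (Fin r) ℝ)
    (γ : ℝ) (hγ : 0 < γ)
    (S T : Matrix (Fin p) (Fin p) ℝ)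
    (hSsym : Sᵀ = S) (hTsym : Tᵀ = T)
    (hS : -(A * S) - S * Aᵀ + B * Bᵀ = 0)
    (hT : -(A * T) - T * Aᵀ + C * Cᵀ = 0)
    (P : Matrix (Fin p) (Fin p) ℝ)
    (hP : P = S - (1 / γ ^ 2 : ℝ) • T)
    (hPinv : IsUnit P.det) :
    (P⁻¹)ᵀ = P⁻¹ ∧
      Aᵀ * P⁻¹ + P⁻¹ * A + P⁻¹ * ((1 / γ ^ 2 : ℝ) • (C * Cᵀ) - B * Bᵀ) * P⁻¹ = 0 := by
  subst hP
  exact lyapunov_to_riccati_general hSsym hTsym hS hT hPinv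
end
end

section
/- Let n be a positive integer, γ > 0, let W ∈ ℝ^{2n×2n} be real orthogonal, and let P, Q ∈ ℝ^{n×n} be symmetric positive definite. Define 𝕏 := Wᵀ·[[0,0],[0,P^{−1}]]·W and 𝕐 := (1/γ²)·𝕁_n·Wᵀ·[[Q^{−1},0],[0,0]]·W·𝕁_nᵀ, and let Z := 𝕁_n·W·𝕁_nᵀ·Wᵀ with n×n-block decomposition Z = [[Z₁, Z₂],[Z₃, Z₁ᵀ]]. Then the spectral radius of 𝕏·𝕐 satisfies ρ(𝕏·𝕐) = (1/γ²)·ρ(Z₁ᵀ·P^{−1}·Z₁·Q^{−1}). -/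
open Matrix

noncomputable section

/-- The spectral radius of a real square matrix: the supremum of the moduli of
the eigenvalues of its complexification. -/
def specRadius {ι : Type*} [Fintype ι] [DecidableEq ι] (M : Matrix ι ι ℝ) : ℝ :=
  sSup {x : ℝ | ∃ μ : ℂ,
    ((M.map (algebraMap ℝ ℂ)) - μ • (1 : Matrix ι ι ℂ)).det = 0 ∧ x = ‖μ‖}

/-!
The nonzero spectra of `A * B` and `B * A` agree, so `ρ` is invariant under cyclic permutation of
factors. Moving `Wᵀ` to the end of `𝕏𝕐` leaves `diag(0, P⁻¹) Lᵀ diag(Q⁻¹, 0) L`, up to the scalar,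
with `L = W 𝕁ᵀ Wᵀ`. Its first block row vanishes, so its spectral radius is that of its lower right
block `P⁻¹ L₁₂ᵀ Q⁻¹ L₁₂`. Since `L` is skew-symmetric, `L₁₂ = -L₂₁ᵀ`, and `L₂₁` is exactly the block
`Z₁` of `Z = 𝕁 L`; the two signs cancel and one more cyclic permutation gives the claim.
-/

section SpecRadius

open scoped Pointwise

variable {ι κ : Type*} [Fintype ι] [DecidableEq ι] [Fintype κ] [DecidableEq κ]

theorem mem_spectrum_mul_comm_of_ne_zero {K : Type*} [Field K] (A : Matrix ι κ K)
    (B : Matrix κ ι K) {μ : K} (hμ : μ ≠ 0) :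
    μ ∈ spectrum K (A * B) ↔ μ ∈ spectrum K (B * A) := by
  have hcharpoly := congrArg (Polynomial.eval μ) (charpoly_mul_comm' A B)
  simp only [Polynomial.eval_mul, Polynomial.eval_pow, Polynomial.eval_X] at hcharpoly
  rw [mem_spectrum_iff_isRoot_charpoly, mem_spectrum_iff_isRoot_charpoly, Polynomial.IsRoot.def,
    Polynomial.IsRoot.def, ← mul_eq_zero_iff_left (pow_ne_zero (Fintype.card κ) hμ), hcharpoly,
    mul_eq_zero_iff_left (pow_ne_zero (Fintype.card ι) hμ)]

theorem specRadius_eq_sSup_image_norm_spectrum (M : Matrix ι ι ℝ) :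
    specRadius M = sSup (norm '' spectrum ℂ (M.map (algebraMap ℝ ℂ))) := by
  have mem_spectrum_iff (μ : ℂ) : μ ∈ spectrum ℂ (M.map (algebraMap ℝ ℂ)) ↔
      (M.map (algebraMap ℝ ℂ) - μ • (1 : Matrix ι ι ℂ)).det = 0 := by
    rw [spectrum.mem_iff, Algebra.algebraMap_eq_smul_one, ← IsUnit.neg_iff, neg_sub,
      isUnit_iff_isUnit_det, isUnit_iff_ne_zero, not_not]
  simp only [specRadius, Set.image, mem_spectrum_iff, eq_comm]

theorem specRadius_nonneg (M : Matrix ι ι ℝ) : 0 ≤ specRadius M := by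
  rw [specRadius_eq_sSup_image_norm_spectrum]
  exact Real.sSup_nonneg (Set.forall_mem_image.2 fun μ _ ↦ norm_nonneg μ)

theorem norm_le_specRadius {M : Matrix ι ι ℝ} {μ : ℂ}
    (hμ : μ ∈ spectrum ℂ (M.map (algebraMap ℝ ℂ))) : ‖μ‖ ≤ specRadius M := by
  rw [specRadius_eq_sSup_image_norm_spectrum]
  exact le_csSup ((finite_spectrum _).image norm).bddAbove (Set.mem_image_of_mem norm hμ)

theorem specRadius_mul_le_specRadius_mul_swap (A : Matrix ι κ ℝ) (B : Matrix κ ι ℝ) :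
    specRadius (A * B) ≤ specRadius (B * A) := by
  rw [specRadius_eq_sSup_image_norm_spectrum (A * B)]
  refine Real.sSup_le (Set.forall_mem_image.2 fun μ hμ ↦ ?_) (specRadius_nonneg _)
  rcases eq_or_ne μ 0 with rfl | hμ_ne
  · simpa only [norm_zero] using specRadius_nonneg (B * A)
  · apply norm_le_specRadius
    rw [Matrix.map_mul] at hμ ⊢
    exact (mem_spectrum_mul_comm_of_ne_zero _ _ hμ_ne).1 hμ

theorem specRadius_mul_comm (A : Matrix ι κ ℝ) (B : Matrix κ ι ℝ) :
    specRadius (A * B) = specRadius (B * A) :=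
  (specRadius_mul_le_specRadius_mul_swap A B).antisymm (specRadius_mul_le_specRadius_mul_swap B A)

theorem spectrum_smul {K : Type*} [Field K] [IsAlgClosed K] (c : K) (M : Matrix ι ι K) :
    spectrum K (c • M) = c • spectrum K M := by
  cases isEmpty_or_nonempty ι
  · simp only [spectrum.of_subsingleton, Set.smul_set_empty]
  · exact spectrum.smul_eq_smul c M (spectrum.nonempty_of_isAlgClosed_of_finiteDimensional K M)

theorem specRadius_smul (c : ℝ) (M : Matrix ι ι ℝ) : specRadius (c • M) = |c| * specRadius M := by
  have hmap : (c • M).map (algebraMap ℝ ℂ) = (c : ℂ) • M.map (algebraMap ℝ ℂ) :=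
    M.map_smulₛₗ _ _ c fun a ↦ Complex.ofReal_mul c a
  have himage (s : Set ℂ) : norm '' ((c : ℂ) • s) = |c| • norm '' s := by
    simp only [← Set.image_smul, Set.image_image, smul_eq_mul, Complex.norm_mul,
      Complex.norm_real, Real.norm_eq_abs]
  rw [specRadius_eq_sSup_image_norm_spectrum, hmap, spectrum_smul, himage,
    Real.sSup_smul_of_nonneg (abs_nonneg c), smul_eq_mul, specRadius_eq_sSup_image_norm_spectrum]

end SpecRadius

section Blocks

variable {k m : Type*} [Fintype k] [DecidableEq k] [Fintype m] [DecidableEq m]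

theorem specRadius_fromBlocks_zero_zero (C : Matrix m k ℝ) (D : Matrix m m ℝ) :
    specRadius (fromBlocks 0 0 C D) = specRadius D := by
  have hfactor : fromBlocks 0 0 C D = fromRows (0 : Matrix k m ℝ) 1 * fromCols C D := by
    rw [fromRows_mul_fromCols, Matrix.zero_mul, Matrix.zero_mul, Matrix.one_mul, Matrix.one_mul]
  rw [hfactor, specRadius_mul_comm, fromCols_mul_fromRows, Matrix.mul_zero, zero_add,
    Matrix.mul_one]

theorem specRadius_fromBlocks_mul_mul_fromBlocks_mul (p : Matrix m m ℝ) (q : Matrix k k ℝ)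
    (A B : Matrix (k ⊕ m) (k ⊕ m) ℝ) :
    specRadius (fromBlocks 0 0 0 p * A * fromBlocks q 0 0 0 * B) =
      specRadius (p * A.toBlocks₂₁ * q * B.toBlocks₁₂) := by
  have hblocks : fromBlocks 0 0 0 p * A * fromBlocks q 0 0 0 * B =
      fromBlocks 0 0 (p * A.toBlocks₂₁ * q * B.toBlocks₁₁)
        (p * A.toBlocks₂₁ * q * B.toBlocks₁₂) := by
    nth_rw 1 [← fromBlocks_toBlocks A, ← fromBlocks_toBlocks B]
    simp [fromBlocks_multiply]
  rw [hblocks, specRadius_fromBlocks_zero_zero]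

theorem specRadius_fromBlocks_mul_transpose_mul_fromBlocks_mul_of_skew (p : Matrix m m ℝ)
    (q : Matrix k k ℝ) {L : Matrix (k ⊕ m) (k ⊕ m) ℝ} (hL : Lᵀ = -L) :
    specRadius (fromBlocks 0 0 0 p * Lᵀ * fromBlocks q 0 0 0 * L) =
      specRadius (L.toBlocks₂₁ᵀ * p * L.toBlocks₂₁ * q) := by
  have hL₂₁ : Lᵀ.toBlocks₂₁ = -L.toBlocks₂₁ := congrArg toBlocks₂₁ hL
  have hL₁₂ : L.toBlocks₁₂ = -L.toBlocks₂₁ᵀ := by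
    rw [← transpose_neg, ← hL₂₁]
    rfl
  calc specRadius (fromBlocks 0 0 0 p * Lᵀ * fromBlocks q 0 0 0 * L)
      = specRadius (p * Lᵀ.toBlocks₂₁ * q * L.toBlocks₁₂) :=
        specRadius_fromBlocks_mul_mul_fromBlocks_mul p q Lᵀ L
    _ = specRadius (p * L.toBlocks₂₁ * q * L.toBlocks₂₁ᵀ) := by
        rw [hL₂₁, hL₁₂, Matrix.mul_neg, Matrix.mul_neg, Matrix.neg_mul, Matrix.neg_mul, neg_neg]
    _ = specRadius (L.toBlocks₂₁ᵀ * p * L.toBlocks₂₁ * q) := by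
        rw [specRadius_mul_comm, ← Matrix.mul_assoc, ← Matrix.mul_assoc]

end Blocks

section Symplectic

variable {m : Type*} [Fintype m] [DecidableEq m]

theorem JJr_transpose : (JJr m)ᵀ = -JJr m := by
  simp [JJr, fromBlocks_transpose, fromBlocks_neg]

theorem toBlocks₁₁_JJr_mul (L : Matrix (m ⊕ m) (m ⊕ m) ℝ) :
    (JJr m * L).toBlocks₁₁ = L.toBlocks₂₁ := by
  nth_rw 1 [← fromBlocks_toBlocks L]
  simp [JJr, fromBlocks_multiply]

theorem spectral_radius_XY_general {ι : Type*} [Fintype ι] [DecidableEq ι] {c : ℝ}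
    {W : Matrix (m ⊕ m) ι ℝ} {K : Matrix ι ι ℝ} (hK : Kᵀ = -K) {p q : Matrix m m ℝ}
    {X : Matrix ι ι ℝ} (hX : X = Wᵀ * fromBlocks (0 : Matrix m m ℝ) 0 0 p * W)
    {Y : Matrix ι ι ℝ}
    (hY : Y = c • (K * Wᵀ * fromBlocks q 0 0 (0 : Matrix m m ℝ) * W * Kᵀ))
    {Z : Matrix (m ⊕ m) (m ⊕ m) ℝ} (hZ : Z = JJr m * W * Kᵀ * Wᵀ) :
    specRadius (X * Y) = |c| * specRadius (Z.toBlocks₁₁ᵀ * p * Z.toBlocks₁₁ * q) := by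
  let L := W * Kᵀ * Wᵀ
  have hL_transpose : Lᵀ = W * K * Wᵀ := by
    simp only [L, transpose_mul, transpose_transpose, Matrix.mul_assoc]
  have hL_skew : Lᵀ = -L := by
    rw [hL_transpose]
    simp only [L, hK, Matrix.mul_neg, Matrix.neg_mul, neg_neg]
  have hZ₁₁ : Z.toBlocks₁₁ = L.toBlocks₂₁ := by
    rw [← toBlocks₁₁_JJr_mul, hZ]
    simp only [L, Matrix.mul_assoc]
  have hXY : X * Y = c • (Wᵀ * (fromBlocks 0 0 0 p * Lᵀ * fromBlocks q 0 0 0 * W * Kᵀ)) := by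
    rw [hX, hY, hL_transpose]
    simp only [Matrix.mul_smul, Matrix.mul_assoc]
  have hcycle : fromBlocks 0 0 0 p * Lᵀ * fromBlocks q 0 0 0 * W * Kᵀ * Wᵀ =
      fromBlocks 0 0 0 p * Lᵀ * fromBlocks q 0 0 0 * L := by
    simp only [L, Matrix.mul_assoc]
  rw [hXY, specRadius_smul, specRadius_mul_comm, hcycle,
    specRadius_fromBlocks_mul_transpose_mul_fromBlocks_mul_of_skew p q hL_skew, hZ₁₁]

end Symplectic

/-- with `W` real orthogonal, `P, Q` symmetric positive
definite, `𝕏 = Wᵀ diag(0, P⁻¹) W`, `𝕐 = (1/γ²) 𝕁 Wᵀ diag(Q⁻¹, 0) W 𝕁ᵀ` and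
`Z = 𝕁 W 𝕁ᵀ Wᵀ = [[Z₁, Z₂],[Z₃, Z₁ᵀ]]`, the spectral radius satisfies
`ρ(𝕏𝕐) = (1/γ²) ρ(Z₁ᵀ P⁻¹ Z₁ Q⁻¹)`. -/
theorem spectral_radius_XY
    (n : ℕ) (hn : 0 < n) (γ : ℝ) (hγ : 0 < γ)
    (W : Matrix (Fin n ⊕ Fin n) (Fin n ⊕ Fin n) ℝ)
    (hW : W * Wᵀ = 1 ∧ Wᵀ * W = 1)
    (P Q : Matrix (Fin n) (Fin n) ℝ) (hP : P.PosDef) (hQ : Q.PosDef)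
    (X : Matrix (Fin n ⊕ Fin n) (Fin n ⊕ Fin n) ℝ)
    (hX : X = Wᵀ * Matrix.fromBlocks 0 0 0 P⁻¹ * W)
    (Y : Matrix (Fin n ⊕ Fin n) (Fin n ⊕ Fin n) ℝ)
    (hY : Y = (1 / γ ^ 2 : ℝ) •
      (JJr (Fin n) * Wᵀ * Matrix.fromBlocks Q⁻¹ 0 0 0 * W * (JJr (Fin n))ᵀ))
    (Z : Matrix (Fin n ⊕ Fin n) (Fin n ⊕ Fin n) ℝ)
    (hZ : Z = JJr (Fin n) * W * (JJr (Fin n))ᵀ * Wᵀ) :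
    specRadius (X * Y) =
      (1 / γ ^ 2) * specRadius ((Z.toBlocks₁₁)ᵀ * P⁻¹ * Z.toBlocks₁₁ * Q⁻¹) := by
  have hγ_inv : |1 / γ ^ 2| = 1 / γ ^ 2 := abs_of_pos (by positivity)
  rw [spectral_radius_XY_general JJr_transpose hX hY hZ, hγ_inv]
end
end

section
/- Let γ > 0. Let C₁ ∈ ℂ^{k×n} and C₂ ∈ ℂ^{l×n} and suppose, with respect to a decomposition ℂⁿ = ℂ^{p} ⊕ ℂ^{q}, the Hermitian matrix A_x := (1/2)C₁†C₁ − (1/2)C₂†C₂ is block diagonal: A_x = diag(A₁, A₃). Let D₁₂ ∈ ℂ^{k×k} and D₂₁ ∈ ℂ^{l×l} be unitary and set B₁ := −C₂†·D₂₁ and B₂ := −C₁†·D₁₂, partitioned conformally as B₁ = [B₁ₓ₁; B₁ₓ₂] and B₂ = [B₂ₓ₁; B₂ₓ₂]. Suppose Hermitian matrices S, T ∈ ℂ^{q×q} solve −A₃·S − S·A₃† + B₂ₓ₂·B₂ₓ₂† = 0 and −A₃·T − T·A₃† + B₁ₓ₂·B₁ₓ₂† = 0 with P := S − (1/γ²)T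 invertible, and Hermitian matrices U, V ∈ ℂ^{p×p} solve A₁·U + U·A₁† + B₁ₓ₁·B₁ₓ₁† = 0 and A₁·V + V·A₁† + B₂ₓ₁·B₂ₓ₁† = 0 with Q := U − (1/γ²)V invertible. Then, with A_y := −A_x: (a) X := diag(0, P^{−1}) solves A_x†·X + X·A_x + X·((1/γ²)B₁B₁† − B₂B₂†)·X = 0; (b) Y := (1/γ²)·diag(Q^{−1}, 0) solves A_y·Y + Y·A_y† + Y·(C₁†C₁ − γ²·C₂†C₂)·Y = 0; and (c) X·Y = 0, so the spectral radius ρ(X·Y) = 0 < 1. -/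
open Matrix

noncomputable section

/-- The spectral radius of a complex square matrix: the supremum of the moduli
of its eigenvalues. -/
def specRadiusC {ι : Type*} [Fintype ι] [DecidableEq ι] (M : Matrix ι ι ℂ) : ℝ :=
  sSup {x : ℝ | ∃ μ : ℂ, (M - μ • (1 : Matrix ι ι ℂ)).det = 0 ∧ x = ‖μ‖}

/-!
If `P` is invertible, then `AᴴP⁻¹ + P⁻¹A + P⁻¹RP⁻¹ = P⁻¹ (AP + PAᴴ + R) P⁻¹`, so inverting a
solution of the Lyapunov equation `AP + PAᴴ + R = 0` solves the Riccati equation with the same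
coefficients. A Riccati equation with block diagonal `A`, evaluated at a matrix supported on one
diagonal block, only sees that block of `A` and of `R`. Since the left-hand side of the Lyapunov
equation is linear in `(R, P)`, the given solutions combine to a solution for the indefinite `R` of
each of the two Riccati equations. The solution of the first is supported on the second block and
that of the second on the first block, so their product vanishes.
-/

/-- The left-hand side `AᴴX + XA + XRX` of the algebraic Riccati equation for `X`. -/
def riccatiOp {n α : Type*} [Fintype n] [NonUnitalNonAssocSemiring α] [Star α]
    (A R X : Matrix n n α) : Matrix n n α :=
  Aᴴ * X + X * A + X * R * X

/-- The left-hand side `AW + WAᴴ + R` of the Lyapunov equation for `W`; the inhomogeneity `R` comes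
before the unknown `W`, in parallel with `riccatiOp`. -/
def lyapunovOp {n α : Type*} [Fintype n] [NonUnitalNonAssocSemiring α] [Star α]
    (A R W : Matrix n n α) : Matrix n n α :=
  A * W + W * Aᴴ + R

section Lyapunov

variable {n α : Type*} [Fintype n]

theorem lyapunovOp_sub [NonUnitalNonAssocRing α] [Star α] (A R R' W W' : Matrix n n α) :
    lyapunovOp A (R - R') (W - W') = lyapunovOp A R W - lyapunovOp A R' W' := by
  simp only [lyapunovOp, Matrix.mul_sub, Matrix.sub_mul]
  abel

theorem lyapunovOp_smul {𝕜 : Type*} [NonUnitalNonAssocSemiring α] [Star α] [Monoid 𝕜]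
    [DistribMulAction 𝕜 α] [IsScalarTower 𝕜 α α] [SMulCommClass 𝕜 α α]
    (c : 𝕜) (A R W : Matrix n n α) :
    lyapunovOp A (c • R) (c • W) = c • lyapunovOp A R W := by
  simp only [lyapunovOp, Matrix.mul_smul, Matrix.smul_mul, smul_add]

theorem lyapunovOp_neg_left [NonUnitalNonAssocRing α] [StarAddMonoid α] (A R W : Matrix n n α) :
    lyapunovOp (-A) R W = -(A * W) - W * Aᴴ + R := by
  rw [lyapunovOp, conjTranspose_neg, Matrix.neg_mul, Matrix.mul_neg, ← sub_eq_add_neg]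

theorem lyapunovOp_neg_neg [NonUnitalNonAssocRing α] [StarAddMonoid α] (A R W : Matrix n n α) :
    lyapunovOp (-A) (-R) W = -lyapunovOp A R W := by
  rw [lyapunovOp_neg_left, lyapunovOp]
  abel

theorem lyapunovOp_sub_smul_eq_zero {𝕜 : Type*} [NonUnitalNonAssocRing α] [Star α] [Monoid 𝕜]
    [DistribMulAction 𝕜 α] [IsScalarTower 𝕜 α α] [SMulCommClass 𝕜 α α]
    {A R R' W W' : Matrix n n α} (hW : lyapunovOp A R W = 0) (hW' : lyapunovOp A R' W' = 0)
    (c : 𝕜) : lyapunovOp A (R - c • R') (W - c • W') = 0 := by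
  rw [lyapunovOp_sub, lyapunovOp_smul, hW, hW', smul_zero, sub_zero]

end Lyapunov

section Riccati

variable {m n α : Type*} [Fintype m] [Fintype n]

theorem riccatiOp_inv [CommRing α] [Star α] [DecidableEq n] (A R : Matrix n n α)
    {P : Matrix n n α} (hP : IsUnit P.det) :
    riccatiOp A R P⁻¹ = P⁻¹ * lyapunovOp A R P * P⁻¹ := by
  have conj_mul_right : P⁻¹ * (A * P) * P⁻¹ = P⁻¹ * A := by
    rw [← Matrix.mul_assoc, mul_nonsing_inv_cancel_right _ _ hP]
  have conj_mul_left : P⁻¹ * (P * Aᴴ) * P⁻¹ = Aᴴ * P⁻¹ := by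
    rw [nonsing_inv_mul_cancel_left _ _ hP]
  rw [riccatiOp, lyapunovOp, Matrix.mul_add, Matrix.mul_add, Matrix.add_mul, Matrix.add_mul,
    conj_mul_right, conj_mul_left, add_comm (Aᴴ * P⁻¹)]

theorem riccatiOp_smul {𝕜 : Type*} [NonUnitalNonAssocSemiring α] [Star α] [Monoid 𝕜]
    [DistribMulAction 𝕜 α] [IsScalarTower 𝕜 α α] [SMulCommClass 𝕜 α α]
    (c : 𝕜) (A R X : Matrix n n α) :
    riccatiOp A R (c • X) = c • riccatiOp A (c • R) X := by
  simp only [riccatiOp, Matrix.mul_smul, Matrix.smul_mul, smul_add]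

theorem riccatiOp_eq_of_isHermitian [NonUnitalNonAssocSemiring α] [Star α] {A : Matrix n n α}
    (hA : A.IsHermitian) (R X : Matrix n n α) :
    riccatiOp A R X = A * X + X * Aᴴ + X * R * X := by
  rw [riccatiOp, hA.eq]

theorem riccatiOp_fromBlocks₁₁ [NonUnitalNonAssocSemiring α] [StarAddMonoid α]
    (A₁₁ X : Matrix m m α) (A₂₁ : Matrix n m α) (A₂₂ : Matrix n n α)
    (R : Matrix (m ⊕ n) (m ⊕ n) α) :
    riccatiOp (fromBlocks A₁₁ 0 A₂₁ A₂₂) R (fromBlocks X 0 0 0) =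
      fromBlocks (riccatiOp A₁₁ R.toBlocks₁₁ X) 0 0 0 := by
  rw [← fromBlocks_toBlocks R]
  simp [riccatiOp, fromBlocks_conjTranspose, fromBlocks_multiply, fromBlocks_add]

theorem riccatiOp_fromBlocks₂₂ [NonUnitalNonAssocSemiring α] [StarAddMonoid α]
    (A₁₁ : Matrix m m α) (A₁₂ : Matrix m n α) (A₂₂ X : Matrix n n α)
    (R : Matrix (m ⊕ n) (m ⊕ n) α) :
    riccatiOp (fromBlocks A₁₁ A₁₂ 0 A₂₂) R (fromBlocks 0 0 0 X) =
      fromBlocks 0 0 0 (riccatiOp A₂₂ R.toBlocks₂₂ X) := by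
  rw [← fromBlocks_toBlocks R]
  simp [riccatiOp, fromBlocks_conjTranspose, fromBlocks_multiply, fromBlocks_add]

theorem riccatiOp_fromBlocks_inv₁₁_eq_zero [CommRing α] [StarAddMonoid α] [DecidableEq m]
    {A₁₁ P : Matrix m m α} (A₂₁ : Matrix n m α) (A₂₂ : Matrix n n α)
    {R : Matrix (m ⊕ n) (m ⊕ n) α} (hP : IsUnit P.det)
    (hlyap : lyapunovOp A₁₁ R.toBlocks₁₁ P = 0) :
    riccatiOp (fromBlocks A₁₁ 0 A₂₁ A₂₂) R (fromBlocks P⁻¹ 0 0 0) = 0 := by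
  rw [riccatiOp_fromBlocks₁₁, riccatiOp_inv _ _ hP, hlyap, Matrix.mul_zero, Matrix.zero_mul,
    fromBlocks_zero]

theorem riccatiOp_fromBlocks_inv₂₂_eq_zero [CommRing α] [StarAddMonoid α] [DecidableEq n]
    (A₁₁ : Matrix m m α) (A₁₂ : Matrix m n α) {A₂₂ P : Matrix n n α}
    {R : Matrix (m ⊕ n) (m ⊕ n) α} (hP : IsUnit P.det)
    (hlyap : lyapunovOp A₂₂ R.toBlocks₂₂ P = 0) :
    riccatiOp (fromBlocks A₁₁ A₁₂ 0 A₂₂) R (fromBlocks 0 0 0 P⁻¹) = 0 := by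
  rw [riccatiOp_fromBlocks₂₂, riccatiOp_inv _ _ hP, hlyap, Matrix.mul_zero, Matrix.zero_mul,
    fromBlocks_zero]

theorem riccatiOp_fromBlocks_inv_sub_smul_eq_zero [CommRing α] [StarAddMonoid α] [DecidableEq n]
    (c : α) (A₁₁ : Matrix m m α) (A₁₂ : Matrix m n α) {A₂₂ S T : Matrix n n α}
    {M N : Matrix (m ⊕ n) (m ⊕ n) α} (hS : lyapunovOp (-A₂₂) M.toBlocks₂₂ S = 0)
    (hT : lyapunovOp (-A₂₂) N.toBlocks₂₂ T = 0) (hP : IsUnit (S - c • T).det) :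
    riccatiOp (fromBlocks A₁₁ A₁₂ 0 A₂₂) (c • N - M) (fromBlocks 0 0 0 (S - c • T)⁻¹) = 0 := by
  refine riccatiOp_fromBlocks_inv₂₂_eq_zero A₁₁ A₁₂ hP ?_
  change lyapunovOp A₂₂ (c • N.toBlocks₂₂ - M.toBlocks₂₂) (S - c • T) = 0
  rw [← neg_eq_zero, ← lyapunovOp_neg_neg, neg_sub]
  exact lyapunovOp_sub_smul_eq_zero hS hT c

theorem riccatiOp_neg_fromBlocks_smul_inv_sub_smul_eq_zero [CommRing α] [StarAddMonoid α]
    [DecidableEq m] {c d : α} (hcd : c * d = 1) {A₁₁ U V : Matrix m m α} (A₂₁ : Matrix n m α)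
    (A₂₂ : Matrix n n α) {M N : Matrix (m ⊕ n) (m ⊕ n) α}
    (hU : lyapunovOp A₁₁ M.toBlocks₁₁ U = 0) (hV : lyapunovOp A₁₁ N.toBlocks₁₁ V = 0)
    (hQ : IsUnit (U - c • V).det) :
    riccatiOp (-fromBlocks A₁₁ 0 A₂₁ A₂₂) (N - d • M)
      (c • fromBlocks (U - c • V)⁻¹ 0 0 0) = 0 := by
  have hlyap : lyapunovOp (-A₁₁) (c • N - M).toBlocks₁₁ (U - c • V) = 0 := by
    change lyapunovOp (-A₁₁) (c • N.toBlocks₁₁ - M.toBlocks₁₁) (U - c • V) = 0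
    rw [← neg_sub M.toBlocks₁₁, lyapunovOp_neg_neg, lyapunovOp_sub_smul_eq_zero hU hV, neg_zero]
  rw [riccatiOp_smul, smul_sub, smul_smul, hcd, one_smul, fromBlocks_neg, neg_zero,
    riccatiOp_fromBlocks_inv₁₁_eq_zero (-A₂₁) (-A₂₂) hQ hlyap, smul_zero]

end Riccati

section Gram

variable {m₁ m₂ n α : Type*} [Fintype n] [NonUnitalNonAssocSemiring α] [Star α]

theorem toBlocks₁₁_fromRows_mul_conjTranspose_self (B₁ : Matrix m₁ n α) (B₂ : Matrix m₂ n α) :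
    (fromRows B₁ B₂ * (fromRows B₁ B₂)ᴴ).toBlocks₁₁ = B₁ * B₁ᴴ :=
  rfl

theorem toBlocks₂₂_fromRows_mul_conjTranspose_self (B₁ : Matrix m₁ n α) (B₂ : Matrix m₂ n α) :
    (fromRows B₁ B₂ * (fromRows B₁ B₂)ᴴ).toBlocks₂₂ = B₂ * B₂ᴴ :=
  rfl

end Gram

theorem conjTranspose_mul_self_eq_of_eq_neg_mul {k k' n α : Type*} [Fintype k] [Fintype k']
    [DecidableEq k] [Ring α] [StarRing α] {B : Matrix n k' α} {C : Matrix k n α}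
    {D : Matrix k k' α} (hD : D * Dᴴ = 1) (hB : B = -(Cᴴ * D)) : Cᴴ * C = B * Bᴴ := by
  calc Cᴴ * C = Cᴴ * (D * Dᴴ) * C := by rw [hD, Matrix.mul_one]
    _ = B * Bᴴ := by
      simp only [hB, conjTranspose_neg, conjTranspose_mul, conjTranspose_conjTranspose,
        Matrix.neg_mul, Matrix.mul_neg, neg_neg, Matrix.mul_assoc]

theorem isHermitian_half_smul_conjTranspose_mul_self_sub {k l n 𝕜 : Type*} [Fintype k] [Fintype l]
    [Field 𝕜] [StarRing 𝕜] (C₁ : Matrix k n 𝕜) (C₂ : Matrix l n 𝕜) :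
    ((1 / 2 : 𝕜) • (C₁ᴴ * C₁) - (1 / 2 : 𝕜) • (C₂ᴴ * C₂)).IsHermitian := by
  simp [IsHermitian, conjTranspose_sub, conjTranspose_smul, conjTranspose_mul]

theorem specRadiusC_zero {ι : Type*} [Fintype ι] [DecidableEq ι] :
    specRadiusC (0 : Matrix ι ι ℂ) = 0 := by
  have moduli_subset : {x : ℝ | ∃ μ : ℂ, ((0 : Matrix ι ι ℂ) - μ • 1).det = 0 ∧ x = ‖μ‖} ⊆
      {0} := by
    rintro _ ⟨μ, hdet, rfl⟩
    rw [zero_sub, ← neg_smul, det_smul, det_one, mul_one] at hdet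
    simpa using eq_zero_of_pow_eq_zero hdet
  rcases Set.subset_singleton_iff_eq.1 moduli_subset with hempty | hzero
  · rw [specRadiusC, hempty, Real.sSup_empty]
  · rw [specRadiusC, hzero, csSup_singleton]

theorem passive_Hinfty_core_general {p q k k' l l' : Type*} [Fintype p] [Fintype q] [Fintype k]
    [Fintype k'] [Fintype l] [Fintype l'] [DecidableEq p] [DecidableEq q] [DecidableEq k]
    [DecidableEq l] {γ : ℂ} (hγ : γ ≠ 0)
    {C₁ : Matrix k (p ⊕ q) ℂ} {C₂ : Matrix l (p ⊕ q) ℂ}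
    {D₁₂ : Matrix k k' ℂ} (hD₁₂ : D₁₂ * D₁₂ᴴ = 1) {D₂₁ : Matrix l l' ℂ} (hD₂₁ : D₂₁ * D₂₁ᴴ = 1)
    {A₁ : Matrix p p ℂ} {A₃ : Matrix q q ℂ}
    (hA : fromBlocks A₁ 0 0 A₃ = (1 / 2 : ℂ) • (C₁ᴴ * C₁) - (1 / 2 : ℂ) • (C₂ᴴ * C₂))
    {B₁x₁ : Matrix p l' ℂ} {B₁x₂ : Matrix q l' ℂ} (hB₁ : fromRows B₁x₁ B₁x₂ = -(C₂ᴴ * D₂₁))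
    {B₂x₁ : Matrix p k' ℂ} {B₂x₂ : Matrix q k' ℂ} (hB₂ : fromRows B₂x₁ B₂x₂ = -(C₁ᴴ * D₁₂))
    {S T : Matrix q q ℂ} (hS : -(A₃ * S) - S * A₃ᴴ + B₂x₂ * B₂x₂ᴴ = 0)
    (hT : -(A₃ * T) - T * A₃ᴴ + B₁x₂ * B₁x₂ᴴ = 0) (hP : IsUnit (S - (1 / γ ^ 2) • T).det)
    {U V : Matrix p p ℂ} (hU : A₁ * U + U * A₁ᴴ + B₁x₁ * B₁x₁ᴴ = 0)
    (hV : A₁ * V + V * A₁ᴴ + B₂x₁ * B₂x₁ᴴ = 0) (hQ : IsUnit (U - (1 / γ ^ 2) • V).det)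
    {Ax Ay X Y : Matrix (p ⊕ q) (p ⊕ q) ℂ} (hAx : Ax = fromBlocks A₁ 0 0 A₃) (hAy : Ay = -Ax)
    (hX : X = fromBlocks 0 0 0 (S - (1 / γ ^ 2) • T)⁻¹)
    (hY : Y = (1 / γ ^ 2) • fromBlocks (U - (1 / γ ^ 2) • V)⁻¹ 0 0 0) :
    Axᴴ * X + X * Ax + X * ((1 / γ ^ 2) • (fromRows B₁x₁ B₁x₂ * (fromRows B₁x₁ B₁x₂)ᴴ) -
        fromRows B₂x₁ B₂x₂ * (fromRows B₂x₁ B₂x₂)ᴴ) * X = 0 ∧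
      Ay * Y + Y * Ayᴴ + Y * (C₁ᴴ * C₁ - γ ^ 2 • (C₂ᴴ * C₂)) * Y = 0 ∧
      X * Y = 0 ∧ specRadiusC (X * Y) = 0 ∧ specRadiusC (X * Y) < 1 := by
  have hAy_herm : Ay.IsHermitian := by
    rw [hAy, hAx, hA]
    exact (isHermitian_half_smul_conjTranspose_mul_self_sub C₁ C₂).neg
  have hXY : X * Y = 0 := by simp [hX, hY, fromBlocks_multiply]
  have hρ : specRadiusC (X * Y) = 0 := by rw [hXY, specRadiusC_zero]
  refine ⟨?_, ?_, hXY, hρ, hρ.trans_lt one_pos⟩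
  · rw [← lyapunovOp_neg_left, ← toBlocks₂₂_fromRows_mul_conjTranspose_self B₂x₁] at hS
    rw [← lyapunovOp_neg_left, ← toBlocks₂₂_fromRows_mul_conjTranspose_self B₁x₁] at hT
    rw [← riccatiOp, hAx, hX]
    exact riccatiOp_fromBlocks_inv_sub_smul_eq_zero _ A₁ 0 hS hT hP
  · have hγ_sq : 1 / γ ^ 2 * γ ^ 2 = 1 := one_div_mul_cancel (pow_ne_zero 2 hγ)
    rw [← lyapunovOp, ← toBlocks₁₁_fromRows_mul_conjTranspose_self _ B₁x₂] at hU
    rw [← lyapunovOp, ← toBlocks₁₁_fromRows_mul_conjTranspose_self _ B₂x₂] at hV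
    rw [← riccatiOp_eq_of_isHermitian hAy_herm, hAy, hAx, hY,
      conjTranspose_mul_self_eq_of_eq_neg_mul hD₁₂ hB₂,
      conjTranspose_mul_self_eq_of_eq_neg_mul hD₂₁ hB₁]
    exact riccatiOp_neg_fromBlocks_smul_inv_sub_smul_eq_zero hγ_sq 0 A₃ hU hV hQ

/-- the algebraic core of coherent feedback `H∞` control of
passive linear quantum systems.  With `A_x = ½C₁ᴴC₁ - ½C₂ᴴC₂ = diag(A₁, A₃)`,
`B₁ = -C₂ᴴD₂₁`, `B₂ = -C₁ᴴD₁₂` (with `D₁₂, D₂₁` unitary) partitioned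
conformally, Hermitian solutions `S, T` and `U, V` of the indicated Lyapunov
equations with `P = S - (1/γ²)T` and `Q = U - (1/γ²)V` invertible give:
(a) `X = diag(0, P⁻¹)` solves the `X`-Riccati equation;
(b) `Y = (1/γ²)·diag(Q⁻¹, 0)` solves the `Y`-Riccati equation (`A_y = -A_x`);
(c) `X·Y = 0`, so `ρ(X·Y) = 0 < 1`. -/
theorem passive_Hinfty_core
    (p q k l : ℕ) (hp : 0 < p) (hq : 0 < q) (hk : 0 < k) (hl : 0 < l)
    (γ : ℝ) (hγ : 0 < γ)
    (C₁ : Matrix (Fin k) (Fin p ⊕ Fin q) ℂ)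
    (C₂ : Matrix (Fin l) (Fin p ⊕ Fin q) ℂ)
    (D₁₂ : Matrix (Fin k) (Fin k) ℂ) (hD₁₂ : D₁₂ ∈ Matrix.unitaryGroup (Fin k) ℂ)
    (D₂₁ : Matrix (Fin l) (Fin l) ℂ) (hD₂₁ : D₂₁ ∈ Matrix.unitaryGroup (Fin l) ℂ)
    (Ax : Matrix (Fin p ⊕ Fin q) (Fin p ⊕ Fin q) ℂ)
    (hAx : Ax = (1 / 2 : ℂ) • (C₁ᴴ * C₁) - (1 / 2 : ℂ) • (C₂ᴴ * C₂))
    (A₁ : Matrix (Fin p) (Fin p) ℂ) (A₃ : Matrix (Fin q) (Fin q) ℂ)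
    (hAxblk : Ax = Matrix.fromBlocks A₁ 0 0 A₃)
    (B₁ : Matrix (Fin p ⊕ Fin q) (Fin l) ℂ) (hB₁ : B₁ = -(C₂ᴴ * D₂₁))
    (B₂ : Matrix (Fin p ⊕ Fin q) (Fin k) ℂ) (hB₂ : B₂ = -(C₁ᴴ * D₁₂))
    (B₁x₁ : Matrix (Fin p) (Fin l) ℂ) (B₁x₂ : Matrix (Fin q) (Fin l) ℂ)
    (hB₁blk : B₁ = Matrix.fromRows B₁x₁ B₁x₂)
    (B₂x₁ : Matrix (Fin p) (Fin k) ℂ) (B₂x₂ : Matrix (Fin q) (Fin k) ℂ)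
    (hB₂blk : B₂ = Matrix.fromRows B₂x₁ B₂x₂)
    (S T : Matrix (Fin q) (Fin q) ℂ) (hSherm : Sᴴ = S) (hTherm : Tᴴ = T)
    (hSlyap : -(A₃ * S) - S * A₃ᴴ + B₂x₂ * B₂x₂ᴴ = 0)
    (hTlyap : -(A₃ * T) - T * A₃ᴴ + B₁x₂ * B₁x₂ᴴ = 0)
    (P : Matrix (Fin q) (Fin q) ℂ) (hPdef : P = S - (1 / (γ : ℂ) ^ 2) • T)
    (hPinv : IsUnit P.det)
    (U V : Matrix (Fin p) (Fin p) ℂ) (hUherm : Uᴴ = U) (hVherm : Vᴴ = V)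
    (hUlyap : A₁ * U + U * A₁ᴴ + B₁x₁ * B₁x₁ᴴ = 0)
    (hVlyap : A₁ * V + V * A₁ᴴ + B₂x₁ * B₂x₁ᴴ = 0)
    (Q : Matrix (Fin p) (Fin p) ℂ) (hQdef : Q = U - (1 / (γ : ℂ) ^ 2) • V)
    (hQinv : IsUnit Q.det)
    (Ay : Matrix (Fin p ⊕ Fin q) (Fin p ⊕ Fin q) ℂ) (hAy : Ay = -Ax)
    (X : Matrix (Fin p ⊕ Fin q) (Fin p ⊕ Fin q) ℂ)
    (hX : X = Matrix.fromBlocks 0 0 0 P⁻¹)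
    (Y : Matrix (Fin p ⊕ Fin q) (Fin p ⊕ Fin q) ℂ)
    (hY : Y = (1 / (γ : ℂ) ^ 2) • Matrix.fromBlocks Q⁻¹ 0 0 0) :
    (Axᴴ * X + X * Ax
        + X * ((1 / (γ : ℂ) ^ 2) • (B₁ * B₁ᴴ) - B₂ * B₂ᴴ) * X = 0)
    ∧ (Ay * Y + Y * Ayᴴ
        + Y * (C₁ᴴ * C₁ - ((γ : ℂ) ^ 2) • (C₂ᴴ * C₂)) * Y = 0)
    ∧ (X * Y = 0 ∧ specRadiusC (X * Y) = 0 ∧ specRadiusC (X * Y) < 1) := by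
  subst hAxblk hB₁blk hB₂blk hPdef hQdef
  exact passive_Hinfty_core_general (by exact_mod_cast hγ.ne') (mem_unitaryGroup_iff.1 hD₁₂)
    (mem_unitaryGroup_iff.1 hD₂₁) hAx hB₁ hB₂ hSlyap hTlyap hPinv hUlyap hVlyap hQinv rfl hAy hX hY
end
end

section
/- Let 0 < κ₁ < κ₂ be real numbers. Define, for γ > √(κ₁/κ₂) (so that γ²κ₂ − κ₁ > 0), the controller parameters A_K(γ) := (κ₁ − κ₂)/2 − κ₂κ₁(1 − γ²)/(γ²κ₂ − κ₁), B_K := −√κ₁, and C_K(γ) := √κ₂ · κ₁(1 − γ²)/(γ²κ₂ − κ₁). Then there exists γ > √(κ₁/κ₂) such that the physical realizability condition 2·A_K(γ) + B_K² + C_K(γ)² = 0 holds; that is, the H∞ controller for the empty cavity can always be realized as a genuine quantum system without adding extra vacuum noise channels, at the cost of a disturbance attenuation level γ strictly larger than √(κ₁/κ₂). -/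
/-!
The attenuation level enters the controller only through
`x = κ₁ (1 - γ²) / (γ² κ₂ - κ₁)`: one has `A_K = (κ₁ - κ₂) / 2 - κ₂ x` and `C_K = √κ₂ x`, so
physical realizability is the quadratic equation `κ₂ (x - 1)² = 2 (κ₂ - κ₁)`. It has the positive
root `x = 1 + √(2 (κ₂ - κ₁) / κ₂)`. Since `x` is a Möbius function of `γ²`, it can be inverted,
and the inverse sends every positive `x` above the pole `γ² = κ₁ / κ₂`.
-/

section Moebius

variable {K : Type*} [Field K] {κ₁ κ₂ x : K}

/-- The factor `κ₁ (1 - g) / (g κ₂ - κ₁)` through which the central controller depends on the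
squared attenuation level `g = γ²`. -/
def controllerGain (κ₁ κ₂ g : K) : K :=
  κ₁ * (1 - g) / (g * κ₂ - κ₁)

/-- The squared attenuation level at which the controller gain equals `x`, that is, the inverse
of the Möbius map `controllerGain κ₁ κ₂`. -/
def sqAttenuation (κ₁ κ₂ x : K) : K :=
  κ₁ * (1 + x) / (x * κ₂ + κ₁)

theorem controllerGain_sqAttenuation (hκ₁ : κ₁ ≠ 0) (hκ : κ₁ ≠ κ₂) (hx : x * κ₂ + κ₁ ≠ 0) :
    controllerGain κ₁ κ₂ (sqAttenuation κ₁ κ₂ x) = x := by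
  have hsub : κ₂ - κ₁ ≠ 0 := sub_ne_zero.mpr hκ.symm
  have numerator : 1 - sqAttenuation κ₁ κ₂ x = x * (κ₂ - κ₁) / (x * κ₂ + κ₁) := by
    rw [sqAttenuation]
    field_simp
    ring
  have denominator :
      sqAttenuation κ₁ κ₂ x * κ₂ - κ₁ = κ₁ * (κ₂ - κ₁) / (x * κ₂ + κ₁) := by
    rw [sqAttenuation]
    field_simp
    ring
  rw [controllerGain, numerator, denominator]
  field_simp

theorem div_lt_sqAttenuation [LinearOrder K] [IsStrictOrderedRing K]
    (hκ₁ : 0 < κ₁) (hκ : κ₁ < κ₂) (hx : 0 < x * κ₂ + κ₁) :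
    κ₁ / κ₂ < sqAttenuation κ₁ κ₂ x := by
  rw [sqAttenuation, div_lt_div_iff₀ (hκ₁.trans hκ) hx, mul_assoc]
  gcongr
  linarith

end Moebius

section Realizability

variable {κ₁ κ₂ : ℝ}

theorem exists_sqrt_lt_controllerGain_sq_eq {x : ℝ} (hκ₁ : 0 < κ₁) (hκ : κ₁ < κ₂)
    (hx : 0 < x * κ₂ + κ₁) :
    ∃ γ : ℝ, √(κ₁ / κ₂) < γ ∧ controllerGain κ₁ κ₂ (γ ^ 2) = x := by
  have hκ₂ : 0 < κ₂ := hκ₁.trans hκ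
  have hlt : κ₁ / κ₂ < sqAttenuation κ₁ κ₂ x := div_lt_sqAttenuation hκ₁ hκ hx
  have hpos : 0 < sqAttenuation κ₁ κ₂ x := (div_pos hκ₁ hκ₂).trans hlt
  refine ⟨√(sqAttenuation κ₁ κ₂ x), Real.sqrt_lt_sqrt (by positivity) hlt, ?_⟩
  rw [Real.sq_sqrt hpos.le, controllerGain_sqAttenuation hκ₁.ne' hκ.ne hx.ne']

theorem exists_pos_mul_sub_one_sq_eq (hκ₂ : 0 < κ₂) (hκ : κ₁ ≤ κ₂) :
    ∃ x : ℝ, 0 < x ∧ κ₂ * (x - 1) ^ 2 = 2 * (κ₂ - κ₁) := by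
  have hquot : 0 ≤ 2 * (κ₂ - κ₁) / κ₂ := div_nonneg (by linarith) hκ₂.le
  refine ⟨1 + √(2 * (κ₂ - κ₁) / κ₂), by positivity, ?_⟩
  rw [add_sub_cancel_left, Real.sq_sqrt hquot, mul_div_cancel₀ _ hκ₂.ne']

theorem physicallyRealizable_iff_controllerGain (hκ₁ : 0 ≤ κ₁) (hκ₂ : 0 ≤ κ₂) (γ : ℝ) :
    2 * ((κ₁ - κ₂) / 2 - κ₂ * κ₁ * (1 - γ ^ 2) / (γ ^ 2 * κ₂ - κ₁)) + (-√κ₁) ^ 2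
        + (√κ₂ * (κ₁ * (1 - γ ^ 2) / (γ ^ 2 * κ₂ - κ₁))) ^ 2 = 0 ↔
      κ₂ * (controllerGain κ₁ κ₂ (γ ^ 2) - 1) ^ 2 = 2 * (κ₂ - κ₁) := by
  rw [mul_assoc κ₂ κ₁, mul_div_assoc κ₂, ← controllerGain, neg_sq, mul_pow,
    Real.sq_sqrt hκ₁, Real.sq_sqrt hκ₂]
  constructor <;> intro h <;> linear_combination h

end Realizability

/-- for the empty-cavity `H∞` central controller with
`A_K(γ) = (κ₁ - κ₂)/2 - κ₂κ₁(1 - γ²)/(γ²κ₂ - κ₁)`, `B_K = -√κ₁` and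
`C_K(γ) = √κ₂·κ₁(1 - γ²)/(γ²κ₂ - κ₁)`, there exists `γ > √(κ₁/κ₂)` such that
the physical realizability condition `2A_K(γ) + B_K² + C_K(γ)² = 0` holds. -/
theorem cavity_controller_physically_realizable
    (κ₁ κ₂ : ℝ) (h0 : 0 < κ₁) (h12 : κ₁ < κ₂) :
    ∃ γ : ℝ, Real.sqrt (κ₁ / κ₂) < γ ∧
      2 * ((κ₁ - κ₂) / 2 - κ₂ * κ₁ * (1 - γ ^ 2) / (γ ^ 2 * κ₂ - κ₁))
        + (-Real.sqrt κ₁) ^ 2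
        + (Real.sqrt κ₂ * (κ₁ * (1 - γ ^ 2) / (γ ^ 2 * κ₂ - κ₁))) ^ 2 = 0 := by
  have hκ₂ : 0 < κ₂ := h0.trans h12
  obtain ⟨x, hx, hroot⟩ := exists_pos_mul_sub_one_sq_eq hκ₂ h12.le
  obtain ⟨γ, hγ, hgain⟩ := exists_sqrt_lt_controllerGain_sq_eq h0 h12 (x := x) (by positivity)
  refine ⟨γ, hγ, (physicallyRealizable_iff_controllerGain h0.le hκ₂.le γ).mpr ?_⟩
  rw [hgain, hroot]
end
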